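/- Let σ be a positive Borel measure on ℝ^d finite on dyadic cubes, let 1 < s < ∞, let {α_Q}_{Q∈𝒟} ⊂ [0,∞), and let Q₀ ∈ 𝒟. Define A₂ := ∑_{Q⊆Q₀} α_Q ( σ(Q)^{-1} ∑_{Q'⊆Q} α_{Q'} )^{s−1} and A₃ := ∫_{Q₀} sup_{Q⊆Q₀} ( (1_Q(x)/σ(Q)) ∑_{Q'⊆Q} α_{Q'} )^s dσ(x). Then A₂ ≤ c(s)^{1/(s−1)} A₃, where c(s) = s for 1 < s ≤ 2 and c(s) = ( s(s−1)⋯(s−k) )^{(s−1)/(s−k−1)} for 2 < s < ∞, where k is the smallest integer greater than s − 2. -/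

import Mathlib

open MeasureTheory ENNReal NNReal Set

noncomputable section

/-- The dyadic cube `Q = 2^{-k}(m + [0,1)^d)` in `ℝ^d`, indexed by `(k, m) ∈ ℤ × ℤ^d`. -/
def dyadicCube (d : ℕ) (Q : ℤ × (Fin d → ℤ)) : Set (Fin d → ℝ) :=
  {x | ∀ i, (Q.2 i : ℝ) * (2 : ℝ) ^ (-Q.1) ≤ x i ∧ x i < ((Q.2 i : ℝ) + 1) * (2 : ℝ) ^ (-Q.1)}

/-- The constant `c(s)`: `c(s) = s` for `1 < s ≤ 2` and
`c(s) = (s(s-1)⋯(s-k))^{(s-1)/(s-k-1)}` for `2 < s < ∞`, where `k = ⌈s-2⌉` is the smallest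
integer greater than `s - 2`. -/
def lemmaConst (s : ℝ) : ℝ :=
  if s ≤ 2 then s
  else (∏ j ∈ Finset.range (⌈s - 2⌉₊ + 1), (s - (j : ℝ))) ^
    ((s - 1) / (s - (⌈s - 2⌉₊ : ℝ) - 1))

/-!
Let `m Q = σ(Q)⁻¹ ∑_{Q' ⊆ Q} α_{Q'}` and let `M` be the maximal function `sup_Q 1_Q m Q`. For
finitely many cubes and `t ≥ 0`, the maximal cubes with `m Q > t` are disjoint and contained in
`{M > t}`, and the weights below such a cube sum to `m Q * σ(Q) ≤ ∫_Q M dσ`. Hence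
`∑_{m Q > t} α_Q ≤ ∫_{M > t} M dσ`: the distribution function of `m` under the weights `α` is
dominated by that of `M` under the measure `M dσ`. The layer-cake formula for the power `s - 1`
turns this into `∑ α_Q (m Q)^(s-1) ≤ ∫ M^(s-1) M dσ = ∫ M^s dσ`, i.e. `A₂ ≤ A₃`, and `c(s) ≥ 1`.
-/

lemma iSup_rpow_of_pos {ι : Sort*} (f : ι → ℝ≥0∞) {p : ℝ} (hp : 0 < p) :
    (⨆ i, f i) ^ p = ⨆ i, f i ^ p :=
  (ENNReal.orderIsoRpow p hp).map_iSup f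

section Domination

variable {X Y : Type*} [MeasurableSpace X] [MeasurableSpace Y] {μ : Measure X} {ν : Measure Y}
  {f : X → ℝ≥0∞} {g : Y → ℝ≥0∞} {p : ℝ}

lemma lintegral_rpow_eq_lintegral_meas_lt_of_ne_top (hf : Measurable f) (hf_top : ∀ x, f x ≠ ∞)
    (hp : 0 < p) :
    ∫⁻ x, f x ^ p ∂μ = ENNReal.ofReal p *
      ∫⁻ t in Ioi (0 : ℝ), μ {x | ENNReal.ofReal t < f x} * ENNReal.ofReal (t ^ (p - 1)) := by
  have layercake := lintegral_rpow_eq_lintegral_meas_lt_mul μ (f := fun x => (f x).toReal)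
    (ae_of_all _ fun _ => ENNReal.toReal_nonneg) hf.ennreal_toReal.aemeasurable hp
  simp only [← ENNReal.ofReal_rpow_of_nonneg ENNReal.toReal_nonneg hp.le,
    ENNReal.ofReal_toReal (hf_top _)] at layercake
  rw [layercake]
  congr 1
  refine setLIntegral_congr_fun measurableSet_Ioi fun t ht => ?_
  simp only [ENNReal.ofReal_lt_iff_lt_toReal (mem_Ioi.1 ht).le (hf_top _)]

lemma lintegral_rpow_le_of_meas_lt_le_of_ne_top (hf : Measurable f) (hg : Measurable g)
    (hf_top : ∀ x, f x ≠ ∞) (hg_top : ∀ y, g y ≠ ∞) (hp : 0 < p)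
    (h : ∀ t, μ {x | t < f x} ≤ ν {y | t < g y}) :
    ∫⁻ x, f x ^ p ∂μ ≤ ∫⁻ y, g y ^ p ∂ν := by
  rw [lintegral_rpow_eq_lintegral_meas_lt_of_ne_top hf hf_top hp,
    lintegral_rpow_eq_lintegral_meas_lt_of_ne_top hg hg_top hp]
  gcongr
  exact h _

lemma lintegral_rpow_le_of_meas_lt_le (hf : Measurable f) (hg : Measurable g) (hp : 0 < p)
    (h : ∀ t, μ {x | t < f x} ≤ ν {y | t < g y}) :
    ∫⁻ x, f x ^ p ∂μ ≤ ∫⁻ y, g y ^ p ∂ν := by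
  have truncated (n : ℕ) : ∫⁻ x, min (f x) n ^ p ∂μ ≤ ∫⁻ y, min (g y) n ^ p ∂ν := by
    have min_ne_top (a : ℝ≥0∞) : min a n ≠ ∞ :=
      (min_lt_of_right_lt (ENNReal.natCast_lt_top n)).ne
    refine lintegral_rpow_le_of_meas_lt_le_of_ne_top (hf.min measurable_const)
      (hg.min measurable_const) (fun _ => min_ne_top _) (fun _ => min_ne_top _) hp fun t => ?_
    by_cases htn : t < n
    · simpa only [lt_min_iff, htn, and_true] using h t
    · simp only [lt_min_iff, htn, and_false, ofPred_false, measure_empty, le_refl]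
  have iSup_min (x : X) : ⨆ n : ℕ, min (f x) n ^ p = f x ^ p := by
    rw [← iSup_rpow_of_pos _ hp, ← inf_iSup_eq, ENNReal.iSup_natCast, inf_top_eq]
  calc ∫⁻ x, f x ^ p ∂μ
      = ⨆ n : ℕ, ∫⁻ x, min (f x) n ^ p ∂μ := by
        simp only [← iSup_min]
        refine lintegral_iSup (fun n => (hf.min measurable_const).pow_const p) fun m n hmn x => ?_
        dsimp only
        gcongr
    _ ≤ ∫⁻ y, g y ^ p ∂ν := iSup_le fun n => (truncated n).trans <| by
        gcongr
        exact min_le_left _ _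

end Domination

section Laminar

variable {X ι : Type*}

/-- A laminar (tree-like) family of sets: any two members are nested or disjoint. Repetitions of
the same set under different indices are allowed. -/
def IsLaminar (E : ι → Set X) : Prop :=
  ∀ i j, E i ⊆ E j ∨ E j ⊆ E i ∨ Disjoint (E i) (E j)

lemma IsLaminar.exists_pairwiseDisjoint_cover {E : ι → Set X} (hE : IsLaminar E) (F : Finset ι) :
    ∃ T ⊆ F, (T : Set ι).PairwiseDisjoint E ∧ ∀ i ∈ F, ∃ j ∈ T, E i ⊆ E j := by
  classical
  induction F using Finset.induction_on with
  | empty => exact ⟨∅, subset_rfl, by simp, by simp⟩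
  | insert i F _ ih =>
    obtain ⟨T, hTF, hdisj, hcover⟩ := ih
    by_cases hi : ∃ j ∈ T, E i ⊆ E j
    · exact ⟨T, hTF.trans (Finset.subset_insert i F), hdisj,
        (Finset.forall_mem_insert _ _ _).2 ⟨hi, hcover⟩⟩
    push Not at hi
    refine ⟨insert i {j ∈ T | ¬ E j ⊆ E i},
      Finset.insert_subset_insert i ((Finset.filter_subset _ T).trans hTF), ?_,
      (Finset.forall_mem_insert _ _ _).2 ⟨⟨i, Finset.mem_insert_self _ _, subset_rfl⟩, ?_⟩⟩
    · rw [Finset.coe_insert]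
      refine (hdisj.subset (Finset.filter_subset _ T)).insert fun j hj _ => ?_
      obtain ⟨hjT, hji⟩ := Finset.mem_filter.1 hj
      exact ((hE i j).resolve_left (hi j hjT)).resolve_left hji
    · intro k hk
      obtain ⟨j, hjT, hkj⟩ := hcover k hk
      by_cases hji : E j ⊆ E i
      · exact ⟨i, Finset.mem_insert_self _ _, hkj.trans hji⟩
      · exact ⟨j, Finset.mem_insert_of_mem (Finset.mem_filter.2 ⟨hjT, hji⟩), hkj⟩

/-- The sum of the weights `α` over all members of the family contained in `E i`; for dyadic cubes
this is `∑_{Q' ⊆ Q} α_{Q'}`. -/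
def weightBelow (E : ι → Set X) (α : ι → ℝ≥0∞) (i : ι) : ℝ≥0∞ :=
  ∑' j : {j // E j ⊆ E i}, α j.1

lemma sum_le_sum_weightBelow (E : ι → Set X) (α : ι → ℝ≥0∞) {F T : Finset ι}
    (hcover : ∀ i ∈ F, ∃ j ∈ T, E i ⊆ E j) :
    ∑ i ∈ F, α i ≤ ∑ j ∈ T, weightBelow E α j :=
  calc ∑ i ∈ F, α i
      = ∑' i : (F : Set ι), α i := (F.tsum_subtype' α).symm
    _ ≤ ∑' i : ⋃ j ∈ T, {i | E i ⊆ E j}, α i :=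
        ENNReal.tsum_mono_subtype α fun i hi => by
          simpa only [mem_iUnion₂, exists_prop, mem_ofPred_eq] using hcover i hi
    _ ≤ ∑ j ∈ T, weightBelow E α j := ENNReal.tsum_biUnion_le α T _

variable [MeasurableSpace X] (σ : Measure X) (E : ι → Set X) (α : ι → ℝ≥0∞)

/-- The density `σ(E i)⁻¹ ∑_{E j ⊆ E i} α j` of the weights below `E i` with respect to `σ`, with
the convention that it vanishes when `σ (E i) = 0`; it also vanishes when `σ (E i) = ∞`. -/
def weightDensity (i : ι) : ℝ≥0∞ :=
  if σ (E i) = 0 then 0 else (σ (E i))⁻¹ * weightBelow E α i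

/-- The maximal function of the densities `weightDensity` of the members indexed by `F`. -/
def densityMaximal (F : Finset ι) (x : X) : ℝ≥0∞ :=
  ⨆ i ∈ F, (E i).indicator 1 x * weightDensity σ E α i

variable {σ E α}

lemma weightDensity_mul_measure {i : ι} (hi : weightDensity σ E α i ≠ 0) :
    weightDensity σ E α i * σ (E i) = weightBelow E α i := by
  unfold weightDensity at hi ⊢
  split_ifs at hi ⊢ with h0
  · exact absurd rfl hi
  have h_top : σ (E i) ≠ ∞ := ENNReal.inv_ne_zero.1 (left_ne_zero_of_mul hi)
  rw [mul_right_comm, ENNReal.inv_mul_cancel h0 h_top, one_mul]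

lemma weightDensity_le_densityMaximal {F : Finset ι} {i : ι} (hi : i ∈ F) {x : X} (hx : x ∈ E i) :
    weightDensity σ E α i ≤ densityMaximal σ E α F x :=
  le_iSup₂_of_le i hi (by rw [indicator_of_mem hx, Pi.one_apply, one_mul])

lemma measurable_densityMaximal (hE : ∀ i, MeasurableSet (E i)) (F : Finset ι) :
    Measurable (densityMaximal σ E α F) :=
  .biSup _ F.countable_toSet fun i _ => (measurable_one.indicator (hE i)).mul_const _

lemma IsLaminar.sum_weight_le_setLIntegral_densityMaximal (hE : IsLaminar E)
    (hE_meas : ∀ i, MeasurableSet (E i)) (F : Finset ι) (t : ℝ≥0∞) :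
    ∑ i ∈ F with t < weightDensity σ E α i, α i ≤
      ∫⁻ x in {x | t < densityMaximal σ E α F x}, densityMaximal σ E α F x ∂σ := by
  obtain ⟨T, hTF, hdisj, hcover⟩ :=
    hE.exists_pairwiseDisjoint_cover {i ∈ F | t < weightDensity σ E α i}
  have hT (j) (hj : j ∈ T) : j ∈ F ∧ t < weightDensity σ E α j := Finset.mem_filter.1 (hTF hj)
  calc ∑ i ∈ F with t < weightDensity σ E α i, α i
      ≤ ∑ j ∈ T, weightBelow E α j := sum_le_sum_weightBelow E α hcover
    _ = ∑ j ∈ T, ∫⁻ _ in E j, weightDensity σ E α j ∂σ := by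
        refine Finset.sum_congr rfl fun j hj => ?_
        rw [setLIntegral_const, weightDensity_mul_measure (ne_bot_of_gt (hT j hj).2)]
    _ ≤ ∑ j ∈ T, ∫⁻ x in E j, densityMaximal σ E α F x ∂σ := by
        refine Finset.sum_le_sum fun j hj => setLIntegral_mono' (hE_meas j) fun x hx => ?_
        exact weightDensity_le_densityMaximal (hT j hj).1 hx
    _ = ∫⁻ x in ⋃ j ∈ T, E j, densityMaximal σ E α F x ∂σ :=
        (lintegral_biUnion_finset hdisj (fun j _ => hE_meas j) _).symm
    _ ≤ ∫⁻ x in {x | t < densityMaximal σ E α F x}, densityMaximal σ E α F x ∂σ :=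
        lintegral_mono_set <| iUnion₂_subset fun j hj _ hx =>
          (hT j hj).2.trans_le (weightDensity_le_densityMaximal (hT j hj).1 hx)

lemma IsLaminar.sum_mul_weightDensity_rpow_le (hE : IsLaminar E)
    (hE_meas : ∀ i, MeasurableSet (E i)) (F : Finset ι) {p : ℝ} (hp : 0 < p) :
    ∑ i ∈ F, α i * weightDensity σ E α i ^ p ≤
      ∫⁻ x, densityMaximal σ E α F x ^ (1 + p) ∂σ := by
  let _ : MeasurableSpace ι := ⊤
  set M := densityMaximal σ E α F
  have hM : Measurable M := measurable_densityMaximal hE_meas F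
  let weights : Measure ι := ∑ i ∈ F, α i • Measure.dirac i
  have weak_type (t : ℝ≥0∞) :
      weights {i | t < weightDensity σ E α i} ≤ σ.withDensity M {x | t < M x} := by
    rw [withDensity_apply _ (measurableSet_lt measurable_const hM)]
    simpa [weights, indicator_apply, Finset.sum_filter] using
      hE.sum_weight_le_setLIntegral_densityMaximal hE_meas F t
  calc ∑ i ∈ F, α i * weightDensity σ E α i ^ p
      = ∫⁻ i, weightDensity σ E α i ^ p ∂weights := by simp [weights]
    _ ≤ ∫⁻ x, M x ^ p ∂σ.withDensity M :=
        lintegral_rpow_le_of_meas_lt_le measurable_from_top hM hp weak_type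
    _ = ∫⁻ x, M x ^ (1 + p) ∂σ := by
        rw [lintegral_withDensity_eq_lintegral_mul σ hM (hM.pow_const p)]
        simp only [Pi.mul_apply, ENNReal.rpow_add_of_nonneg _ _ zero_le_one hp.le,
          ENNReal.rpow_one]

lemma densityMaximal_rpow_le (F : Finset ι) {J : Set ι} (hFJ : (F : Set ι) ⊆ J) {s : ℝ}
    (hs : 0 < s) (x : X) :
    densityMaximal σ E α F x ^ s ≤
      ⨆ i : J, ((E i).indicator 1 x * weightDensity σ E α i) ^ s := by
  rw [← iSup_rpow_of_pos _ hs]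
  gcongr
  exact iSup₂_le fun i hi =>
    le_iSup (fun i : J => (E i).indicator 1 x * weightDensity σ E α i) ⟨i, hFJ hi⟩

theorem IsLaminar.tsum_mul_weightDensity_rpow_le (hE : IsLaminar E)
    (hE_meas : ∀ i, MeasurableSet (E i)) (J : Set ι) {s : ℝ} (hs : 1 < s) :
    ∑' i : J, α i * weightDensity σ E α i ^ (s - 1) ≤
      ∫⁻ x, ⨆ i : J, ((E i).indicator 1 x * weightDensity σ E α i) ^ s ∂σ := by
  refine ENNReal.summable.tsum_le_of_sum_le fun F => ?_
  let F' : Finset ι := F.map (Function.Embedding.subtype _)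
  have hF'J : (F' : Set ι) ⊆ J := by simp [F']
  calc ∑ i ∈ F, α i * weightDensity σ E α i ^ (s - 1)
      = ∑ i ∈ F', α i * weightDensity σ E α i ^ (s - 1) := by simp [F']
    _ ≤ ∫⁻ x, densityMaximal σ E α F' x ^ s ∂σ := by
        simpa only [add_sub_cancel] using
          hE.sum_mul_weightDensity_rpow_le hE_meas F' (sub_pos.2 hs)
    _ ≤ _ := lintegral_mono (densityMaximal_rpow_le F' hF'J (zero_lt_one.trans hs))

end Laminar

section DyadicCube

variable {d : ℕ}

lemma measurableSet_dyadicCube (Q : ℤ × (Fin d → ℤ)) : MeasurableSet (dyadicCube d Q) := by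
  unfold dyadicCube
  measurability

lemma mem_dyadicCube_iff_floor {Q : ℤ × (Fin d → ℤ)} {x : Fin d → ℝ} :
    x ∈ dyadicCube d Q ↔ ∀ i, ⌊x i * (2 : ℝ) ^ Q.1⌋ = Q.2 i := by
  have h2 : (0 : ℝ) < (2 : ℝ) ^ Q.1 := by positivity
  simp only [dyadicCube, mem_ofPred_eq, Int.floor_eq_iff, zpow_neg, ← div_eq_mul_inv,
    div_le_iff₀ h2, lt_div_iff₀ h2]

lemma floor_mul_two_zpow_of_le (y : ℝ) {k l : ℤ} (hkl : k ≤ l) :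
    ⌊y * (2 : ℝ) ^ k⌋ = ⌊y * (2 : ℝ) ^ l⌋ / ((2 ^ (l - k).toNat : ℕ) : ℤ) := by
  obtain ⟨n, rfl⟩ := Int.le.dest hkl
  rw [← Int.floor_div_natCast, add_sub_cancel_left, Int.toNat_natCast, Nat.cast_pow,
    Nat.cast_ofNat, zpow_add₀ two_ne_zero, zpow_natCast, ← mul_assoc,
    mul_div_cancel_right₀ _ (by positivity)]

lemma dyadicCube_subset_of_le_of_mem {Q R : ℤ × (Fin d → ℤ)} (hRQ : R.1 ≤ Q.1) {x : Fin d → ℝ}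
    (hxQ : x ∈ dyadicCube d Q) (hxR : x ∈ dyadicCube d R) :
    dyadicCube d Q ⊆ dyadicCube d R := by
  intro y hyQ
  rw [mem_dyadicCube_iff_floor] at *
  intro i
  rw [floor_mul_two_zpow_of_le _ hRQ, hyQ i, ← hxR i, floor_mul_two_zpow_of_le _ hRQ, hxQ i]

lemma isLaminar_dyadicCube (d : ℕ) : IsLaminar (dyadicCube d) := by
  intro Q R
  by_cases hdisj : Disjoint (dyadicCube d Q) (dyadicCube d R)
  · exact Or.inr (Or.inr hdisj)
  obtain ⟨x, hxQ, hxR⟩ := not_disjoint_iff.1 hdisj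
  rcases le_total R.1 Q.1 with hRQ | hQR
  · exact Or.inl (dyadicCube_subset_of_le_of_mem hRQ hxQ hxR)
  · exact Or.inr (Or.inl (dyadicCube_subset_of_le_of_mem hQR hxR hxQ))

end DyadicCube

lemma one_le_lemmaConst {s : ℝ} (hs : 1 ≤ s) : 1 ≤ lemmaConst s := by
  unfold lemmaConst
  split_ifs with h
  · exact hs
  have hk : (⌈s - 2⌉₊ : ℝ) < s - 2 + 1 := Nat.ceil_lt_add_one (by linarith)
  refine Real.one_le_rpow (Finset.one_le_prod fun j hj => ?_) (div_nonneg ?_ ?_)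
  · have : (j : ℝ) ≤ ⌈s - 2⌉₊ := by exact_mod_cast Finset.mem_range_succ_iff.1 hj
    linarith
  all_goals linarith

theorem A2_le_A3_general {X ι : Type*} [MeasurableSpace X] (σ : Measure X) {E : ι → Set X}
    (hE : IsLaminar E) (hE_meas : ∀ i, MeasurableSet (E i)) (α : ι → ℝ≥0∞) {s : ℝ} (hs : 1 < s)
    (i₀ : ι) :
    ∑' i : {i // E i ⊆ E i₀}, α i.1 * weightDensity σ E α i.1 ^ (s - 1) ≤
      ∫⁻ x in E i₀, ⨆ i : {i // E i ⊆ E i₀},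
        ((E i.1).indicator 1 x * weightDensity σ E α i.1) ^ s ∂σ := by
  rw [setLIntegral_eq_of_support_subset]
  · exact hE.tsum_mul_weightDensity_rpow_le hE_meas {i | E i ⊆ E i₀} hs
  · refine Function.support_subset_iff'.2 fun x hx => ?_
    simp only [ENNReal.iSup_eq_zero]
    intro i
    rw [indicator_of_notMem (fun hxi => hx (i.2 hxi)), zero_mul,
      ENNReal.zero_rpow_of_pos (zero_lt_one.trans hs)]

/-- The estimate `A₂ ≤ c(s)^{1/(s-1)} A₃` of Lemma 2.1 (with the convention
that terms with `σ(Q) = 0` vanish). -/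
theorem A2_le_A3
    (d : ℕ) (hd : 0 < d) (σ : Measure (Fin d → ℝ))
    (hσ : ∀ Q, σ (dyadicCube d Q) ≠ ∞)
    (s : ℝ) (hs : 1 < s)
    (α : ℤ × (Fin d → ℤ) → ℝ≥0)
    (Q₀ : ℤ × (Fin d → ℤ)) :
    (∑' Q : {Q : ℤ × (Fin d → ℤ) // dyadicCube d Q ⊆ dyadicCube d Q₀},
        (α Q.1 : ℝ≥0∞) *
          (if σ (dyadicCube d Q.1) = 0 then 0
            else (σ (dyadicCube d Q.1))⁻¹ *
              ∑' Q' : {Q' : ℤ × (Fin d → ℤ) // dyadicCube d Q' ⊆ dyadicCube d Q.1},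
                (α Q'.1 : ℝ≥0∞)) ^ (s - 1)) ≤
      ENNReal.ofReal (lemmaConst s ^ (1 / (s - 1))) *
        ∫⁻ x in dyadicCube d Q₀,
          ⨆ Q : {Q : ℤ × (Fin d → ℤ) // dyadicCube d Q ⊆ dyadicCube d Q₀},
            ((dyadicCube d Q.1).indicator 1 x *
              (if σ (dyadicCube d Q.1) = 0 then 0
                else (σ (dyadicCube d Q.1))⁻¹ *
                  ∑' Q' : {Q' : ℤ × (Fin d → ℤ) // dyadicCube d Q' ⊆ dyadicCube d Q.1},
                    (α Q'.1 : ℝ≥0∞))) ^ s ∂σ := by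
  refine (A2_le_A3_general σ (isLaminar_dyadicCube d) measurableSet_dyadicCube
    (fun Q => (α Q : ℝ≥0∞)) hs Q₀).trans (le_mul_of_one_le_left zero_le ?_)
  exact ENNReal.one_le_ofReal.2 <|
    Real.one_le_rpow (one_le_lemmaConst hs.le) (one_div_nonneg.2 (sub_nonneg.2 hs.le))

end
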